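/- Nash–Williams inequality: Let G=(V,E) be a finite network with positive conductances c_e, let a ≠ z be vertices, and let Γ_1, …, Γ_N ⊆ E be pairwise disjoint cutsets, each separating a from z. Then R_eff(a ↔ z) ≥ Σ_{n=1}^N ( Σ_{e ∈ Γ_n} c_e )^{−1}. Equivalently, every flow θ from a to z of strength 1 satisfies E(θ) ≥ Σ_{n=1}^N ( Σ_{e ∈ Γ_n} c_e )^{−1}. -/

import Mathlib

/-!
The Nash–Williams inequality (flow form).

The finite network is a finite connected simple graph `G` with positive
conductances `c e` on the (undirected) edges `e : Sym2 V`; resistances are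
`(c e)⁻¹`.  A flow from `a` to `z` is an antisymmetric function
`θ : V → V → ℝ` vanishing on non-adjacent pairs and satisfying the node law
away from `a, z`; since `θ` vanishes off edges, sums over all vertices agree
with sums over neighbours.  Its energy is `∑_{e={x,y}∈E} r_e θ(x,y)², `
written below as `(1/2) * ∑ x, ∑ y, θ x y ^ 2 / c s(x,y)` (off-edge terms
vanish since there `θ x y = 0`).  A cutset `Γ` separating `a` from `z` is a
set of edges met by every path from `a` to `z`.
-/

open Finset

variable {V : Type} [Fintype V] [DecidableEq V]

/-- `θ` is a flow from `a` to `z` in `G`. -/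
def IsFlow (G : SimpleGraph V) (a z : V) (θ : V → V → ℝ) : Prop :=
  (∀ x y, θ x y = -θ y x) ∧
  (∀ x y, ¬G.Adj x y → θ x y = 0) ∧
  (∀ x, x ≠ a → x ≠ z → ∑ y, θ x y = 0)

/-- The energy of a flow with respect to conductances `c` on the edges. -/
noncomputable def flowEnergy (c : Sym2 V → ℝ) (θ : V → V → ℝ) : ℝ :=
  (1 / 2) * ∑ u, ∑ v, θ u v ^ 2 / c s(u, v)

/-!
A cutset `Γ` contains the edge boundary of a vertex set `S ∋ a` avoiding `z`, namely the set of
vertices that can be reached from `a` without using `Γ`. The flow out of `S` is the strength of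
`θ`, so Cauchy–Schwarz on the edges of `Γ` bounds the energy dissipated there from below by
`‖θ‖² / ∑_{e ∈ Γ} c e`. Disjoint cutsets dissipate disjoint portions of the total energy.
-/

section AntisymmetricFunctions

variable {α R : Type*} [Fintype α] [Ring R]

theorem sum_sum_sub_mul_of_antisymm {θ : α → α → R} (hθ : ∀ x y, θ x y = -θ y x) (f : α → R) :
    ∑ u, ∑ v, (f u - f v) * θ u v = 2 * ∑ u, f u * ∑ v, θ u v := by
  have sum_second : ∑ u, ∑ v, f v * θ u v = -∑ u, ∑ v, f u * θ u v := by
    rw [sum_comm]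
    simp only [← sum_neg_distrib, ← mul_neg]
    exact sum_congr rfl fun u _ ↦ sum_congr rfl fun v _ ↦ by rw [hθ v u]
  simp only [sub_mul, sum_sub_distrib, sum_second, sub_neg_eq_add, ← mul_sum, two_mul]

end AntisymmetricFunctions

section OrientedEdges

variable {α : Type*} [Fintype α] [DecidableEq α]

/-- The ordered pairs underlying the edges of `Γ`: both orientations of each edge, so that sums over
edges can be compared with the sums over ordered pairs in `flowEnergy`. -/
def orientedEdges (Γ : Finset (Sym2 α)) : Finset (α × α) :=
  {p | s(p.1, p.2) ∈ Γ}

@[simp]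
theorem mem_orientedEdges {Γ : Finset (Sym2 α)} {p : α × α} :
    p ∈ orientedEdges Γ ↔ s(p.1, p.2) ∈ Γ := by
  simp [orientedEdges]

theorem disjoint_orientedEdges {Γ Δ : Finset (Sym2 α)} (h : Disjoint Γ Δ) :
    Disjoint (orientedEdges Γ) (orientedEdges Δ) :=
  disjoint_left.2 fun _ hΓ hΔ ↦
    disjoint_left.1 h (mem_orientedEdges.1 hΓ) (mem_orientedEdges.1 hΔ)

theorem orientedEdges_singleton (x y : α) : orientedEdges {s(x, y)} = {(x, y), (y, x)} := by
  ext ⟨u, v⟩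
  simp

theorem sum_orientedEdges {M : Type*} [AddCommMonoid M] {Γ : Finset (Sym2 α)}
    (hΓ : ∀ e ∈ Γ, ¬e.IsDiag) (f : Sym2 α → M) :
    ∑ p ∈ orientedEdges Γ, f s(p.1, p.2) = 2 • ∑ e ∈ Γ, f e := by
  have sum_single : ∀ e ∈ Γ, ∑ p ∈ orientedEdges {e}, f s(p.1, p.2) = 2 • f e := by
    rintro ⟨x, y⟩ he
    have hxy : x ≠ y := hΓ _ he
    rw [orientedEdges_singleton, sum_pair (by simp [hxy]), Sym2.eq_swap (a := y), two_nsmul]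
  have orientedEdges_eq : orientedEdges Γ = Γ.biUnion fun e ↦ orientedEdges {e} := by
    ext
    simp
  rw [orientedEdges_eq, sum_biUnion fun e _ e' _ hne ↦
    disjoint_orientedEdges (disjoint_singleton.2 hne), sum_congr rfl sum_single, smul_sum]

end OrientedEdges

section Cutsets

variable {α : Type*} {G : SimpleGraph α} {a z : α} {Γ : Set (Sym2 α)}

/-- `Γ` is a cutset separating `a` from `z`: it meets every path from `a` to `z`. -/
def IsCutset (G : SimpleGraph α) (a z : α) (Γ : Set (Sym2 α)) : Prop :=
  ∀ p : G.Walk a z, p.IsPath → ∃ e ∈ Γ, e ∈ p.edges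

theorem IsCutset.not_reachable_deleteEdges (hΓ : IsCutset G a z Γ) :
    ¬(G.deleteEdges Γ).Reachable a z := by
  intro h
  obtain ⟨p, hp⟩ := h.exists_isPath
  obtain ⟨e, heΓ, hep⟩ := hΓ (p.mapLe (G.deleteEdges_le Γ)) (hp.mapLe _)
  rw [SimpleGraph.Walk.edges_mapLe_eq_edges] at hep
  have he : e ∈ G.edgeSet \ Γ := by
    simpa only [SimpleGraph.edgeSet_deleteEdges] using p.edges_subset_edgeSet hep
  exact he.2 heΓ

theorem IsCutset.exists_set_separating (hΓ : IsCutset G a z Γ) :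
    ∃ S : Set α, a ∈ S ∧ z ∉ S ∧ ∀ u v, G.Adj u v → s(u, v) ∉ Γ → (u ∈ S ↔ v ∈ S) := by
  refine ⟨{v | (G.deleteEdges Γ).Reachable a v}, .rfl, hΓ.not_reachable_deleteEdges, ?_⟩
  intro u v huv huvΓ
  have hadj : (G.deleteEdges Γ).Adj u v := SimpleGraph.deleteEdges_adj.2 ⟨huv, huvΓ⟩
  exact ⟨fun hu ↦ hu.trans hadj.reachable, fun hv ↦ hv.trans hadj.symm.reachable⟩

end Cutsets

section Flows

variable {G : SimpleGraph V} {a z : V} {θ : V → V → ℝ} {c : Sym2 V → ℝ}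

omit [DecidableEq V] in
theorem IsFlow.sum_sum_sub_mul (hθ : IsFlow G a z θ) (f : V → ℝ) :
    ∑ u, ∑ v, (f u - f v) * θ u v = 2 * ((f a - f z) * ∑ v, θ a v) := by
  obtain ⟨antisymm, -, node_law⟩ := hθ
  -- Only differences of `f` matter; normalizing `f z = 0` removes the net flow at `z`.
  have normalized := sum_sum_sub_mul_of_antisymm antisymm fun u ↦ f u - f z
  simp only [sub_sub_sub_cancel_right] at normalized
  rw [normalized, Fintype.sum_eq_single a]
  intro u hua
  obtain rfl | huz := eq_or_ne u z
  · rw [sub_self, zero_mul]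
  · rw [node_law u hua huz, mul_zero]

omit [DecidableEq V] in
theorem IsFlow.sq_div_nonneg (hθ : IsFlow G a z θ) (hc : ∀ e ∈ G.edgeSet, 0 ≤ c e) (u v : V) :
    0 ≤ θ u v ^ 2 / c s(u, v) := by
  by_cases huv : G.Adj u v
  · exact div_nonneg (sq_nonneg _) (hc _ huv)
  · simp [hθ.2.1 u v huv]

/-- The part of the energy of `θ` dissipated in the edges of `Γ`. As in `flowEnergy`, each edge
is counted once in each orientation and the total is halved. -/
noncomputable def flowEnergyOn (c : Sym2 V → ℝ) (θ : V → V → ℝ) (Γ : Finset (Sym2 V)) : ℝ :=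
  (1 / 2) * ∑ p ∈ orientedEdges Γ, θ p.1 p.2 ^ 2 / c s(p.1, p.2)

theorem IsFlow.sum_flowEnergyOn_le (hθ : IsFlow G a z θ) (hc : ∀ e ∈ G.edgeSet, 0 ≤ c e)
    {ι : Type*} {s : Finset ι} {Γ : ι → Finset (Sym2 V)} (hΓ : (s : Set ι).PairwiseDisjoint Γ) :
    ∑ n ∈ s, flowEnergyOn c θ (Γ n) ≤ flowEnergy c θ := by
  simp only [flowEnergyOn, flowEnergy, ← mul_sum]
  rw [← sum_biUnion fun m hm n hn hmn ↦ disjoint_orientedEdges (hΓ hm hn hmn),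
    ← Fintype.sum_prod_type' fun u v ↦ θ u v ^ 2 / c s(u, v)]
  gcongr
  · exact fun p _ _ ↦ hθ.sq_div_nonneg hc p.1 p.2
  · exact subset_univ _

theorem IsFlow.sum_orientedEdges_sub_mul (hθ : IsFlow G a z θ) {Γ : Finset (Sym2 V)} {f : V → ℝ}
    (hf : ∀ u v, G.Adj u v → s(u, v) ∉ Γ → f u = f v) :
    ∑ p ∈ orientedEdges Γ, (f p.1 - f p.2) * θ p.1 p.2 = 2 * ((f a - f z) * ∑ v, θ a v) := by
  rw [← hθ.sum_sum_sub_mul f, ← Fintype.sum_prod_type' fun u v ↦ (f u - f v) * θ u v]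
  refine sum_subset (subset_univ _) fun p _ hp ↦ ?_
  rw [mem_orientedEdges] at hp
  by_cases hadj : G.Adj p.1 p.2
  · rw [hf _ _ hadj hp, sub_self, zero_mul]
  · rw [hθ.2.1 _ _ hadj, mul_zero]

theorem IsFlow.sq_strength_div_le_flowEnergyOn (hθ : IsFlow G a z θ) {Γ : Finset (Sym2 V)}
    (hΓ : (Γ : Set (Sym2 V)) ⊆ G.edgeSet) (hcut : IsCutset G a z Γ) (hc : ∀ e ∈ Γ, 0 < c e) :
    (∑ v, θ a v) ^ 2 / ∑ e ∈ Γ, c e ≤ flowEnergyOn c θ Γ := by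
  classical
  obtain ⟨S, haS, hzS, hS⟩ := hcut.exists_set_separating
  let f : V → ℝ := S.indicator 1
  have flow_across : ∑ p ∈ orientedEdges Γ, (f p.1 - f p.2) * θ p.1 p.2 = 2 * ∑ v, θ a v := by
    rw [hθ.sum_orientedEdges_sub_mul fun u v huv huvΓ ↦ by
      simp only [f, Set.indicator_apply, hS u v huv huvΓ, Pi.one_apply]]
    simp [f, haS, hzS]
  have sum_conductance : ∑ p ∈ orientedEdges Γ, c s(p.1, p.2) = 2 * ∑ e ∈ Γ, c e := by
    rw [sum_orientedEdges fun e he ↦ G.not_isDiag_of_mem_edgeSet (hΓ he), two_nsmul, two_mul]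
  have sq_sub_le_one (u v : V) : (f u - f v) ^ 2 ≤ 1 := by
    by_cases hu : u ∈ S <;> by_cases hv : v ∈ S <;> simp [f, hu, hv]
  have c_pos : ∀ p ∈ orientedEdges Γ, 0 < c s(p.1, p.2) := fun p hp ↦
    hc _ (mem_orientedEdges.1 hp)
  calc (∑ v, θ a v) ^ 2 / ∑ e ∈ Γ, c e
      = (1 / 2) * ((2 * ∑ v, θ a v) ^ 2 / (2 * ∑ e ∈ Γ, c e)) := by ring
    _ = (1 / 2) * ((∑ p ∈ orientedEdges Γ, (f p.1 - f p.2) * θ p.1 p.2) ^ 2 /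
          ∑ p ∈ orientedEdges Γ, c s(p.1, p.2)) := by rw [flow_across, sum_conductance]
    _ ≤ (1 / 2) * ∑ p ∈ orientedEdges Γ, ((f p.1 - f p.2) * θ p.1 p.2) ^ 2 / c s(p.1, p.2) := by
        gcongr
        exact sq_sum_div_le_sum_sq_div _ _ c_pos
    _ ≤ flowEnergyOn c θ Γ := by
        unfold flowEnergyOn
        simp only [mul_pow]
        gcongr with p hp
        · exact (c_pos p hp).le
        · exact mul_le_of_le_one_left (sq_nonneg _) (sq_sub_le_one _ _)

omit [DecidableEq V] in
theorem nash_williams_general (hc : ∀ e ∈ G.edgeSet, 0 < c e) {ι : Type*} {s : Finset ι}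
    {Γ : ι → Finset (Sym2 V)} (hΓ : ∀ n ∈ s, (Γ n : Set (Sym2 V)) ⊆ G.edgeSet)
    (hdisj : (s : Set ι).PairwiseDisjoint Γ) (hcut : ∀ n ∈ s, IsCutset G a z (Γ n))
    (hθ : IsFlow G a z θ) :
    (∑ v, θ a v) ^ 2 * ∑ n ∈ s, (∑ e ∈ Γ n, c e)⁻¹ ≤ flowEnergy c θ := by
  classical
  calc (∑ v, θ a v) ^ 2 * ∑ n ∈ s, (∑ e ∈ Γ n, c e)⁻¹
      = ∑ n ∈ s, (∑ v, θ a v) ^ 2 / ∑ e ∈ Γ n, c e := by simp only [mul_sum, div_eq_mul_inv]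
    _ ≤ ∑ n ∈ s, flowEnergyOn c θ (Γ n) := sum_le_sum fun n hn ↦
        hθ.sq_strength_div_le_flowEnergyOn (hΓ n hn) (hcut n hn) fun e he ↦ hc e (hΓ n hn he)
    _ ≤ flowEnergy c θ := hθ.sum_flowEnergyOn_le (fun e he ↦ (hc e he).le) hdisj

end Flows

/-- **Nash–Williams inequality**: if `Γ 0, …, Γ (N-1)` are pairwise disjoint
cutsets separating `a` from `z`, then every unit flow from `a` to `z` has
energy at least `∑ n, (∑_{e ∈ Γ n} c e)⁻¹`; equivalently
`R_eff(a ↔ z) ≥ ∑ n, (∑_{e ∈ Γ n} c e)⁻¹`. -/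
theorem nash_williams (G : SimpleGraph V) (hG : G.Connected)
    (c : Sym2 V → ℝ) (hc : ∀ e ∈ G.edgeSet, 0 < c e)
    (a z : V) (haz : a ≠ z)
    (N : ℕ) (Γ : Fin N → Finset (Sym2 V))
    (hΓ : ∀ n, (Γ n : Set (Sym2 V)) ⊆ G.edgeSet)
    (hdisj : ∀ m n, m ≠ n → Disjoint (Γ m) (Γ n))
    (hcut : ∀ n, ∀ p : G.Walk a z, p.IsPath → ∃ e ∈ Γ n, e ∈ p.edges)
    (θ : V → V → ℝ) (hθ : IsFlow G a z θ) (hstrength : ∑ v, θ a v = 1) :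
    ∑ n : Fin N, (∑ e ∈ Γ n, c e)⁻¹ ≤ flowEnergy c θ := by
  simpa [hstrength] using nash_williams_general hc (s := univ) (fun n _ ↦ hΓ n)
    (fun m _ n _ ↦ hdisj m n) (fun n _ ↦ hcut n) hθ
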